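/- For every integer d ≥ 1, every natural number k, and every real m ∈ [0, 1], it holds that 2·(1 − g_d^{(k)}(m)) ≤ (2·(1 − m))^{(d+1)^k}. -/

import Mathlib

noncomputable def g (d : ℕ) : ℝ → ℝ :=
  fun m => ∑ i ∈ Finset.range (d + 1),
    (1 / 4 ^ i : ℝ) * (Nat.choose (2 * i) i) * (m * (1 - m ^ 2) ^ i)

noncomputable def aCoef (i : ℕ) : ℝ := (1 / 4 ^ i : ℝ) * (Nat.choose (2 * i) i)

lemma aCoef_nonneg (i : ℕ) : 0 ≤ aCoef i := by unfold aCoef; positivity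

lemma aCoef_succ (d : ℕ) : 2 * ((d : ℝ) + 1) * aCoef (d + 1) = (2 * d + 1) * aCoef d := by
  have h := Nat.succ_mul_centralBinom_succ d
  simp only [Nat.centralBinom] at h
  have h' : ((d : ℝ) + 1) * ((2 * (d + 1)).choose (d + 1) : ℕ)
      = 2 * (2 * d + 1) * ((2 * d).choose d : ℕ) := by exact_mod_cast h
  unfold aCoef
  have h4 : (4 : ℝ) ^ d ≠ 0 := by positivity
  rw [pow_succ]
  field_simp
  linear_combination 2 * h'

lemma aCoef_bound (d : ℕ) : (2 * d + 1) * aCoef d ≤ (d : ℝ) + 1 := by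
  induction d with
  | zero => simp [aCoef]
  | succ d ih =>
    have h := aCoef_succ d
    have h0 := aCoef_nonneg (d + 1)
    have hd : (0 : ℝ) ≤ d := Nat.cast_nonneg d
    have h1 : aCoef (d + 1) ≤ 1 / 2 := by
      by_contra! hc
      nlinarith
    push_cast
    nlinarith

lemma g_eq_zero_case (m : ℝ) : g 0 m = m := by simp [g]

lemma g_succ (d : ℕ) (m : ℝ) :
    g (d + 1) m = g d m + aCoef (d + 1) * (m * (1 - m ^ 2) ^ (d + 1)) := by
  unfold g aCoef
  rw [Finset.sum_range_succ]

lemma g_one (d : ℕ) : g d 1 = 1 := by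
  induction d with
  | zero => simp [g]
  | succ d ih => rw [g_succ, ih]; simp

lemma g_deriv (d : ℕ) (m : ℝ) :
    HasDerivAt (g d) ((2 * d + 1) * aCoef d * (1 - m ^ 2) ^ d) m := by
  induction d with
  | zero =>
    have : g 0 = id := funext g_eq_zero_case
    rw [this]
    simpa [aCoef] using hasDerivAt_id m
  | succ d ih =>
    have he : g (d + 1) = fun x => g d x + aCoef (d + 1) * (x * (1 - x ^ 2) ^ (d + 1)) :=
      funext (g_succ d)
    rw [he]
    have hu : HasDerivAt (fun x : ℝ => 1 - x ^ 2) (-(2 * m)) m := by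
      simpa using (hasDerivAt_pow 2 m).const_sub 1
    have h1 := ih.add (((hasDerivAt_id m).mul (hu.pow (d + 1))).const_mul (aCoef (d + 1)))
    refine h1.congr_deriv ?_
    have h := aCoef_succ d
    simp
    rw [pow_succ]
    linear_combination (-(1 - m ^ 2) ^ d) * h

lemma g_nonneg (d : ℕ) (m : ℝ) (h0 : 0 ≤ m) (h1 : m ≤ 1) : 0 ≤ g d m := by
  unfold g
  have : 0 ≤ 1 - m ^ 2 := by nlinarith
  positivity

lemma g_le_one (d : ℕ) (m : ℝ) (h0 : 0 ≤ m) (h1 : m ≤ 1) : g d m ≤ 1 := by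
  have hmono : MonotoneOn (g d) (Set.Icc 0 1) := by
    apply monotoneOn_of_hasDerivWithinAt_nonneg (convex_Icc 0 1)
      (fun x _ => (g_deriv d x).continuousAt.continuousWithinAt)
      (fun x _ => (g_deriv d x).hasDerivWithinAt)
    intro x hx
    rw [interior_Icc] at hx
    have : 0 ≤ 1 - x ^ 2 := by nlinarith [hx.1, hx.2]
    have := aCoef_nonneg d
    positivity
  have := hmono ⟨h0, h1⟩ ⟨zero_le_one, le_refl 1⟩ h1
  rwa [g_one] at this

lemma g_step (d : ℕ) (m : ℝ) (h0 : 0 ≤ m) (h1 : m ≤ 1) :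
    2 * (1 - g d m) ≤ (2 * (1 - m)) ^ (d + 1) := by
  have hder : ∀ x : ℝ, HasDerivAt (fun x : ℝ => (2 * (1 - x)) ^ (d + 1) - 2 * (1 - g d x))
      (2 * ((2 * d + 1) * aCoef d * (1 - x ^ 2) ^ d - (d + 1) * (2 * (1 - x)) ^ d)) x := by
    intro x
    have hu : HasDerivAt (fun x : ℝ => 2 * (1 - x)) (-2) x := by
      simpa using ((hasDerivAt_id x).const_sub 1).const_mul 2
    refine ((hu.pow (d + 1)).sub (((g_deriv d x).const_sub 1).const_mul 2)).congr_deriv ?_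
    simp
    ring
  have hanti : AntitoneOn (fun x : ℝ => (2 * (1 - x)) ^ (d + 1) - 2 * (1 - g d x))
      (Set.Icc 0 1) := by
    apply antitoneOn_of_hasDerivWithinAt_nonpos (convex_Icc 0 1)
      (fun x _ => (hder x).continuousAt.continuousWithinAt)
      (fun x _ => (hder x).hasDerivWithinAt)
    intro x hx
    rw [interior_Icc] at hx
    have hx0 : 0 ≤ 1 - x ^ 2 := by nlinarith [hx.1, hx.2]
    have hx1 : 1 - x ^ 2 ≤ 2 * (1 - x) := by nlinarith [hx.1, hx.2]
    have hp := pow_le_pow_left₀ hx0 hx1 d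
    have hq := mul_le_mul (aCoef_bound d) hp (pow_nonneg hx0 d) (by positivity)
    linarith
  have := hanti ⟨h0, h1⟩ ⟨zero_le_one, le_refl 1⟩ h1
  simp [g_one] at this
  linarith

theorem stmt_7 (d : ℕ) (hd : 1 ≤ d) (k : ℕ) (m : ℝ) (hm : m ∈ Set.Icc (0 : ℝ) 1) :
    2 * (1 - (g d)^[k] m) ≤ (2 * (1 - m)) ^ ((d + 1) ^ k) := by
  induction k generalizing m with
  | zero => simp
  | succ k ih =>
    have hl := g_le_one d m hm.1 hm.2
    have h := ih (g d m) ⟨g_nonneg d m hm.1 hm.2, hl⟩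
    rw [Function.iterate_succ_apply]
    refine h.trans ?_
    rw [pow_succ (d + 1) k, mul_comm ((d + 1) ^ k), pow_mul]
    exact pow_le_pow_left₀ (by linarith) (g_step d m hm.1 hm.2) _
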